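/- Let m > 2 be a fixed integer and let q be a prime power with (m-1) dividing (q-1). If q > (2^m · m)^2, then for every integer n with 1 < n < q and (n-1) dividing (q-1), not every element of F_q is the sum of an m-potent element and an n-potent element, i.e., C_m + C_n ≠ F_q. -/

import Mathlib

/-!
Let `χ` be a nontrivial character of the field `F` with `q` elements which is trivial on the
`(n - 1)`-th roots of unity. If every element of `F` is the sum of an element of `S` and an
`n`-potent, then for every `x` some factor of `∏ a ∈ S, (1 - χ (x - a))` vanishes, unless `x ∈ S`.
The sum of this product over `x` is therefore at most `#S * 2 ^ #S`. Expanding it gives the main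
term `q` and character sums `∑ x, ∏ a ∈ U, χ (x - a)`, each at most `(#S - 1) * √q` by Weil's bound,
which is impossible for large `q`.

Weil's bound itself is obtained from Stepanov's method. Attach to `ψ(g) = ∏ a ∈ U, χ (g a)` the
series `L(t) = ∑ ψ(g) t ^ deg g` over monic polynomials `g`; it is a polynomial `∏ (1 - αᵢ t)` of
degree less than `#U`, whose linear coefficient is the character sum. Unique factorization says that
the power sums `-∑ αᵢ ^ k` are the analogous character sums over the extension of degree `k`, and
over extensions of even degree `2 r` Stepanov's auxiliary polynomial shows these to be `O(q ^ r)`.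
Hence `|αᵢ| ≤ √q` for all `i`.
-/

open Finset Polynomial

section Stepanov

theorem sum_ne_zero_of_natTrailingDegree_injOn {R ι : Type*} [Semiring R] {s : Finset ι}
    {t : ι → R[X]} (hinj : ∀ i ∈ s, ∀ j ∈ s, t i ≠ 0 → t j ≠ 0 →
      (t i).natTrailingDegree = (t j).natTrailingDegree → i = j)
    (hne : ∃ i ∈ s, t i ≠ 0) : ∑ i ∈ s, t i ≠ 0 := by
  classical
  obtain ⟨i, hi, hmin⟩ := {i ∈ s | t i ≠ 0}.exists_min_image
    (fun i => (t i).natTrailingDegree) (by simpa [Finset.Nonempty] using hne)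
  simp only [mem_filter] at hi hmin
  have hcoeff : (∑ j ∈ s, t j).coeff (t i).natTrailingDegree = (t i).trailingCoeff := by
    rw [finsetSum_coeff, sum_eq_single_of_mem i hi.1, trailingCoeff]
    intro j hj hji
    by_cases hj0 : t j = 0
    · rw [hj0, coeff_zero]
    · exact coeff_eq_zero_of_lt_natTrailingDegree <|
        (hmin j ⟨hj, hj0⟩).lt_of_ne fun h => hji (hinj i hi.1 j hj hi.2 hj0 h).symm
  intro hsum
  rw [hsum, coeff_zero] at hcoeff
  exact hi.2 (trailingCoeff_eq_zero.1 hcoeff.symm)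

theorem natTrailingDegree_pow_eq {R : Type*} [Semiring R] [NoZeroDivisors R] [Nontrivial R]
    {f : R[X]} (hf : f ≠ 0) (n : ℕ) :
    (f ^ n).natTrailingDegree = n * f.natTrailingDegree := by
  induction n with
  | zero => simp
  | succ n ih => rw [pow_succ, natTrailingDegree_mul (pow_ne_zero _ hf) hf, ih, add_one_mul]

theorem stepanov_exponent_injective {s ℓ h e : ℕ} (hs : s = ℓ * h + 1) (hcop : ℓ.Coprime e)
    {ρ ρ' i i' j j' : ℕ} (hi : i < ℓ) (hi' : i' < ℓ) (hρ : ℓ * (ρ + e) < s)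
    (hρ' : ℓ * (ρ' + e) < s) (heq : ρ + s * j + i * h * e = ρ' + s * j' + i' * h * e) :
    i = i' ∧ j = j' := by
  -- Since `ℓ * h ≡ -1 [MOD s]`, multiplying by `ℓ` makes both sides Euclidean divisions by `s`.
  have hdiv : ℓ * ρ + i' * e + s * (ℓ * j + i * e) = ℓ * ρ' + i * e + s * (ℓ * j' + i' * e) := by
    subst hs
    zify at heq ⊢
    linear_combination (ℓ : ℤ) * heq
  have hlt : ℓ * ρ + i' * e < s := by nlinarith
  have hlt' : ℓ * ρ' + i * e < s := by nlinarith
  have hquot : ℓ * j + i * e = ℓ * j' + i' * e := by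
    have hs0 : 0 < s := by omega
    simpa [Nat.add_mul_div_left _ _ hs0, Nat.div_eq_of_lt, hlt, hlt'] using congrArg (· / s) hdiv
  have hmod : i * e ≡ i' * e [MOD ℓ] := by
    simpa [Nat.ModEq, Nat.mul_add_mod] using congrArg (· % ℓ) hquot
  obtain rfl : i = i' :=
    (Nat.ModEq.cancel_right_of_coprime hcop hmod).eq_of_lt_of_lt hi hi'
  exact ⟨rfl, Nat.eq_of_mul_eq_mul_left (by omega) (Nat.add_right_cancel hquot)⟩

variable {K : Type*} [Field K] {ℓ B : ℕ}

/-- The auxiliary polynomial of Stepanov's method, a combination of the products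
`X ^ (s * j) * f ^ (i * h)` whose coefficients `P (i, j)` are polynomials of low degree. -/
noncomputable def stepanovPoly (s h : ℕ) (f : K[X]) (P : Fin ℓ × Fin B → K[X]) : K[X] :=
  ∑ k, P k * X ^ (s * k.2.1) * f ^ (k.1.1 * h)

/-- A polynomial of low degree which takes the values of
`f ^ ((ℓ - 1) * h) * stepanovPoly s h f P ^ s` at the points `x` with `f x ^ (h * (s + 1)) = ω` of
the field with `s ^ 2` elements. -/
noncomputable def stepanovReduction (s h : ℕ) (f : K[X]) (ω : K) (P : Fin ℓ × Fin B → K[X]) :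
    K[X] :=
  ∑ k, P k ^ s * C (ω ^ k.1.1) * X ^ k.2.1 * f ^ ((ℓ - 1 - k.1.1) * h)

variable {s h A D : ℕ} {f : K[X]} {P : Fin ℓ × Fin B → K[X]}

theorem stepanovPoly_ne_zero (hs : s = ℓ * h + 1) (hf : f ≠ 0)
    (hcop : ℓ.Coprime f.natTrailingDegree) (hA : ℓ * (A + f.natTrailingDegree) ≤ s)
    (hP : ∀ k, (P k).natDegree < A) (hne : ∃ k, P k ≠ 0) : stepanovPoly s h f P ≠ 0 := by
  have htrailing {k} (hk : P k ≠ 0) : (P k * X ^ (s * k.2.1) * f ^ (k.1.1 * h)).natTrailingDegree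
      = (P k).natTrailingDegree + s * k.2.1 + k.1.1 * h * f.natTrailingDegree := by
    rw [natTrailingDegree_mul (mul_ne_zero hk (pow_ne_zero _ X_ne_zero)) (pow_ne_zero _ hf),
      natTrailingDegree_mul_X_pow hk, natTrailingDegree_pow_eq hf]
  have hsmall (k : Fin ℓ × Fin B) :
      ℓ * ((P k).natTrailingDegree + f.natTrailingDegree) < s := by
    have hℓ : 0 < ℓ := k.1.pos
    have := (natTrailingDegree_le_natDegree (P k)).trans_lt (hP k)
    nlinarith
  refine sum_ne_zero_of_natTrailingDegree_injOn (fun k _ k' _ hk hk' heq => ?_) ?_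
  · rw [htrailing (by rintro h0; simp [h0] at hk), htrailing (by rintro h0; simp [h0] at hk')]
      at heq
    obtain ⟨h₁, h₂⟩ := stepanov_exponent_injective hs hcop k.1.2 k'.1.2 (hsmall k) (hsmall k') heq
    exact Prod.ext (Fin.ext h₁) (Fin.ext h₂)
  · obtain ⟨k, hk⟩ := hne
    exact ⟨k, mem_univ k, mul_ne_zero (mul_ne_zero hk (pow_ne_zero _ X_ne_zero)) (pow_ne_zero _ hf)⟩

theorem natDegree_pow_mul_le (hs : s = ℓ * h + 1) (hD : f.natDegree ≤ D) {i : ℕ} (hi : i ≤ ℓ) :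
    (f ^ (i * h)).natDegree ≤ s * D := by
  refine natDegree_pow_le.trans (Nat.mul_le_mul ?_ hD)
  exact (Nat.mul_le_mul_right h hi).trans (hs ▸ Nat.le_succ _)

theorem natDegree_stepanovPoly_le (hs : s = ℓ * h + 1) (hD : f.natDegree ≤ D)
    (hP : ∀ k, (P k).natDegree < A) : (stepanovPoly s h f P).natDegree ≤ A + s * B + s * D := by
  refine natDegree_sum_le_of_forall_le _ _ fun k _ => ?_
  refine natDegree_mul_le_of_le (natDegree_mul_le_of_le (hP k).le ?_)
    (natDegree_pow_mul_le hs hD k.1.2.le)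
  exact (natDegree_X_pow _).le.trans (Nat.mul_le_mul_left _ k.2.2.le)

theorem natDegree_stepanovReduction_lt (hs : s = ℓ * h + 1) (hD : f.natDegree ≤ D) (hA : 0 < A)
    (hP : ∀ k, (P k).natDegree < A) (ω : K) :
    (stepanovReduction s h f ω P).natDegree < s * A + B + s * D := by
  have hs0 : 0 < s := by omega
  refine Nat.lt_of_le_pred (by positivity) (natDegree_sum_le_of_forall_le _ _ fun k _ => ?_)
  have hpow : (P k ^ s).natDegree ≤ s * (A - 1) :=
    natDegree_pow_le.trans (Nat.mul_le_mul_left _ (Nat.le_pred_of_lt (hP k)))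
  have hterm := natDegree_mul_le_of_le (natDegree_mul_le_of_le (natDegree_mul_le_of_le hpow
    (natDegree_C (ω ^ k.1.1)).le) (natDegree_X_pow k.2.1).le)
    (natDegree_pow_mul_le hs hD (show ℓ - 1 - k.1.1 ≤ ℓ by omega))
  have hmul : s * (A - 1) ≤ s * A := Nat.mul_le_mul_left _ A.pred_le
  have := k.2.2
  rw [Nat.pred_eq_sub_one]
  omega

variable {p r : ℕ} [Fact p.Prime] [CharP K p]

theorem eval_stepanovReduction (hsp : s = p ^ r) {x : K} (hx : x ^ (s * s) = x) :
    (stepanovReduction s h f (f.eval x ^ (h * (s + 1))) P).eval x =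
      f.eval x ^ ((ℓ - 1) * h) * (stepanovPoly s h f P).eval x ^ s := by
  have hfrob : (stepanovPoly s h f P).eval x ^ s =
      ∑ k, ((P k).eval x * x ^ (s * k.2.1) * f.eval x ^ (k.1.1 * h)) ^ s := by
    simp only [stepanovPoly, eval_finsetSum, eval_mul, eval_pow, eval_X, hsp]
    exact sum_pow_char_pow _ _ _ _
  rw [hfrob, mul_sum]
  simp only [stepanovReduction, eval_finsetSum, eval_mul, eval_pow, eval_X, eval_C]
  refine sum_congr rfl fun k _ => ?_
  have hexp : (ℓ - 1) * h = (ℓ - 1 - k.1.1) * h + k.1.1 * h := by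
    rw [← add_mul, Nat.sub_add_cancel (by omega)]
  have hxpow : (x ^ (s * k.2.1)) ^ s = x ^ k.2.1 := by
    rw [← pow_mul, mul_right_comm, pow_mul, hx]
  rw [mul_pow, mul_pow, hxpow, hexp]
  ring

theorem stepanovReduction_sub (hsp : s = p ^ r) (ω : K) (P Q : Fin ℓ × Fin B → K[X]) :
    stepanovReduction s h f ω (P - Q) =
      stepanovReduction s h f ω P - stepanovReduction s h f ω Q := by
  simp only [stepanovReduction, Pi.sub_apply, hsp, sub_pow_char_pow, sub_mul, sum_sub_distrib]

theorem exists_stepanovReduction_eq_zero [Finite K] (hsp : s = p ^ r) (hs : s = ℓ * h + 1)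
    (hD : f.natDegree ≤ D) (hA : 0 < A) (hcount : s * A + B + s * D < ℓ * B * A) (ω : K) :
    ∃ P : Fin ℓ × Fin B → K[X], (∀ k, (P k).natDegree < A) ∧ (∃ k, P k ≠ 0) ∧
      stepanovReduction s h f ω P = 0 := by
  have := Fintype.ofFinite K
  classical
  let P (c : Fin ℓ × Fin B → Fin A → K) (k : Fin ℓ × Fin B) : K[X] := ofFn A (c k)
  have hP (c k) : (P c k).natDegree < A := ofFn_natDegree_lt hA _
  obtain ⟨c, c', hne, hcoeff⟩ := Fintype.exists_ne_map_eq_of_card_lt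
    (fun c (i : Fin (s * A + B + s * D)) => (stepanovReduction s h f ω (P c)).coeff i) (by
      simp only [Fintype.card_fun, Fintype.card_fin, Fintype.card_prod, ← pow_mul]
      rw [mul_comm A]
      exact Nat.pow_lt_pow_right Fintype.one_lt_card hcount)
  have hred : stepanovReduction s h f ω (P c) = stepanovReduction s h f ω (P c') := by
    have hdeg (c) := natDegree_stepanovReduction_lt hs hD hA (hP c) ω
    refine (ext_iff_natDegree_le (Nat.le_pred_of_lt (hdeg c)) (Nat.le_pred_of_lt (hdeg c'))).2
      fun i hi => congrFun hcoeff ⟨i, ?_⟩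
    have := hdeg c
    rw [Nat.pred_eq_sub_one] at hi
    omega
  refine ⟨P c - P c', fun k => ?_, ?_, ?_⟩
  · exact (natDegree_sub_le _ _).trans_lt (max_lt (hP c k) (hP c' k))
  · obtain ⟨k, hk⟩ := Function.ne_iff.1 hne
    exact ⟨k, sub_ne_zero.2 fun h => hk (injective_ofFn A h)⟩
  · rw [stepanovReduction_sub hsp, hred, sub_self]

variable [Fintype K] [DecidableEq K]

theorem card_eval_pow_eq_le_of_parameters (hsp : s = p ^ r) (hK : Fintype.card K = s ^ 2)
    (hs : s = ℓ * h + 1) (hf : f ≠ 0) (hcop : ℓ.Coprime f.natTrailingDegree)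
    (hD : f.natDegree ≤ D) (hA0 : 0 < A) (hA : ℓ * (A + D) ≤ s)
    (hcount : s * A + B + s * D < ℓ * B * A) (ω : K) :
    #{x : K | f.eval x ≠ 0 ∧ f.eval x ^ (h * (s + 1)) = ω} ≤ A + s * B + s * D := by
  obtain ⟨P, hP, hne, hred⟩ := exists_stepanovReduction_eq_zero hsp hs hD hA0 hcount ω
  have htrailing := (natTrailingDegree_le_natDegree f).trans hD
  have hW := stepanovPoly_ne_zero hs hf hcop (A := A) (hA.trans' (by gcongr)) hP hne
  refine (card_le_card fun x hx => ?_).trans ((stepanovPoly s h f P).roots.toFinset_card_le.trans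
    ((card_roots' _).trans (natDegree_stepanovPoly_le hs hD hP)))
  obtain ⟨hx0, rfl⟩ := (mem_filter.1 hx).2
  have heval := eval_stepanovReduction (h := h) (f := f) (P := P) hsp (x := x)
    (by rw [← sq, ← hK, FiniteField.pow_card])
  rw [hred, eval_zero, eq_comm, mul_eq_zero_iff_left (pow_ne_zero _ hx0)] at heval
  rw [Multiset.mem_toFinset, mem_roots hW]
  exact eq_zero_of_pow_eq_zero heval

theorem mul_card_eval_pow_eq_le (hsp : s = p ^ r) (hK : Fintype.card K = s ^ 2)
    (hs : s = ℓ * h + 1) (hℓ : 0 < ℓ) (hf : f ≠ 0) (hcop : ℓ.Coprime f.natTrailingDegree) (ω : K) :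
    ℓ * #{x : K | f.eval x ≠ 0 ∧ f.eval x ^ (h * (s + 1)) = ω}
      ≤ s ^ 2 + 5 * ℓ ^ 2 * (f.natDegree + 3) * s := by
  set D := f.natDegree
  rcases lt_or_ge s (4 * ℓ * (D + 3)) with hsmall | hlarge
  · have htrivial : #{x : K | f.eval x ≠ 0 ∧ f.eval x ^ (h * (s + 1)) = ω} ≤ s ^ 2 :=
      (card_le_univ _).trans_eq hK
    calc _ ≤ ℓ * s ^ 2 := Nat.mul_le_mul_left _ htrivial
      _ = ℓ * s * s := by ring
      _ ≤ ℓ * (4 * ℓ * (D + 3)) * s := by gcongr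
      _ ≤ _ := by nlinarith [Nat.zero_le (ℓ ^ 2 * (D + 3) * s)]
  -- Take `A = s / (2 * ℓ)`, and `B` slightly larger than `h ≈ s / ℓ`.
  · have hA_le : 2 * ℓ * (s / (2 * ℓ)) ≤ s := Nat.mul_div_le _ _
    have hlt_A : s < 2 * ℓ * (s / (2 * ℓ) + 1) := Nat.lt_mul_div_succ s (by omega)
    generalize s / (2 * ℓ) = A at hA_le hlt_A
    have hs4A : s ≤ 4 * (ℓ * A) := by nlinarith
    have hA0 : 0 < A := Nat.pos_of_ne_zero (by rintro rfl; omega)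
    have hAℓ : A ≤ ℓ * A := Nat.le_mul_of_pos_left _ hℓ
    have hcount : s * A + (h + 4 * D + 10) + s * D < ℓ * (h + 4 * D + 10) * A := by
      have hexpand : ℓ * (h + 4 * D + 10) * A + A = s * A + ℓ * A * (4 * D + 10) := by
        rw [hs]; ring
      have hmul := Nat.mul_le_mul_right (4 * D + 9) hs4A
      nlinarith
    have hℓℓ : ℓ ≤ ℓ ^ 2 := Nat.le_self_pow two_ne_zero _
    calc _ ≤ ℓ * (A + s * (h + 4 * D + 10) + s * D) := Nat.mul_le_mul_left _ <|
          card_eval_pow_eq_le_of_parameters hsp hK hs hf hcop le_rfl hA0 (by nlinarith) hcount ω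
      _ ≤ ℓ * (s + s * (h + 4 * D + 10) + s * D) := by gcongr; nlinarith
      _ = s * (ℓ * h) + ℓ * (5 * D + 11) * s := by ring
      _ ≤ s * s + ℓ ^ 2 * (5 * (D + 3)) * s := by gcongr <;> omega
      _ = _ := by ring

end Stepanov

section CharacterSums

theorem norm_sum_le_of_card_level_set_le {ι : Type*} {s : Finset ι} {g : ι → ℂ} {ℓ : ℕ}
    (hℓ : 1 < ℓ) (hg : ∀ i ∈ s, g i ^ ℓ = 1) {b : ℝ}
    (hb : ∀ z, (#{i ∈ s | g i = z} : ℝ) ≤ b) : ‖∑ i ∈ s, g i‖ ≤ ℓ * b - #s := by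
  have hℓ0 : ℓ ≠ 0 := by omega
  have : NeZero ℓ := ⟨hℓ0⟩
  obtain ⟨ζ, hζ⟩ : ∃ ζ : ℂ, IsPrimitiveRoot ζ ℓ := ⟨_, Complex.isPrimitiveRoot_exp ℓ hℓ0⟩
  set N : ℕ → ℝ := fun k => #{i ∈ s | g i = ζ ^ k} with hN
  have hinj : Set.InjOn (ζ ^ ·) (range ℓ : Set ℕ) := by simpa using hζ.injOn_pow
  have hmaps : ∀ i ∈ s, g i ∈ (range ℓ).image (ζ ^ ·) := fun i hi => by
    obtain ⟨k, hk, hki⟩ := hζ.eq_pow_of_pow_eq_one (hg i hi)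
    exact mem_image.2 ⟨k, mem_range.2 hk, hki⟩
  have hsum : ∑ i ∈ s, g i = ∑ k ∈ range ℓ, ((N k - b : ℝ) : ℂ) * ζ ^ k := by
    have hfiber (z : ℂ) : ∑ i ∈ s with g i = z, g i = #{i ∈ s | g i = z} * z := by
      rw [sum_congr rfl fun i hi => (mem_filter.1 hi).2, sum_const, nsmul_eq_mul]
    rw [← sum_fiberwise_of_maps_to hmaps, sum_image hinj]
    simp only [hfiber, hN, Complex.ofReal_sub, Complex.ofReal_natCast, sub_mul, sum_sub_distrib,
      ← mul_sum, hζ.geom_sum_eq_zero hℓ, mul_zero, sub_zero]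
  have hcard : ∑ k ∈ range ℓ, N k = #s := by
    rw [card_eq_sum_card_fiberwise hmaps, sum_image hinj, Nat.cast_sum]
  calc ‖∑ i ∈ s, g i‖ ≤ ∑ k ∈ range ℓ, (b - N k) := by
        rw [hsum]
        refine norm_sum_le_of_le _ fun k _ => ?_
        rw [norm_mul, norm_pow, hζ.norm'_eq_one hℓ0, one_pow, mul_one, Complex.norm_real,
          Real.norm_eq_abs, abs_sub_comm, abs_of_nonneg (sub_nonneg.2 (hb _))]
    _ = ℓ * b - #s := by rw [sum_sub_distrib, hcard, sum_const, card_range, nsmul_eq_mul]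

theorem pow_eq_one_of_mulChar_apply_eq_one {F R : Type*} [Field F] [Fintype F]
    [CommMonoidWithZero R] {χ : MulChar F R} {t : ℕ} (ht : Fintype.card F - 1 ∣ orderOf χ * t)
    {b : F} (hb : b ≠ 0) (hχ : χ b = 1) : b ^ t = 1 := by
  classical
  obtain ⟨g, hg⟩ := IsCyclic.exists_generator (α := Fˣ)
  obtain ⟨k, hk⟩ := mem_powers_iff_mem_zpowers.2 (hg (Units.mk0 b hb))
  obtain rfl : (g : F) ^ k = b := by simpa using congrArg Units.val hk
  have hdvd : orderOf χ ∣ k := by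
    rwa [orderOf_dvd_iff_pow_eq_one, MulChar.eq_iff hg, MulChar.pow_apply_coe,
      MulChar.one_apply_coe, ← map_pow]
  have hg_ord : g ^ (Fintype.card F - 1) = 1 := by rw [← Fintype.card_units, pow_card_eq_one]
  obtain ⟨c, hc⟩ := ht.trans (Nat.mul_dvd_mul_right hdvd t)
  rw [← pow_mul, hc, pow_mul, ← Units.val_pow_eq_pow_val, hg_ord, Units.val_one, one_pow]

theorem card_le_card_eval_ne_zero_add_natDegree {K : Type*} [CommRing K] [IsDomain K] [Fintype K]
    [DecidableEq K] {f : K[X]} (hf : f ≠ 0) :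
    Fintype.card K ≤ #{x : K | f.eval x ≠ 0} + f.natDegree := by
  have hzeros : #{x : K | ¬ f.eval x ≠ 0} ≤ f.natDegree := by
    refine (card_le_card fun x hx => ?_).trans (f.roots.toFinset_card_le.trans (card_roots' f))
    simpa [hf] using hx
  rw [← card_univ, ← card_filter_add_card_filter_not (f.eval · ≠ 0)]
  exact Nat.add_le_add_left hzeros _

variable {F K : Type*} [Field F] [Fintype F] [Field K] [Fintype K] [Algebra F K]
  {χ : MulChar F ℂ} {r : ℕ} {f : K[X]}

theorem orderOf_mul_card_mulChar_norm_eq_le [DecidableEq K]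
    (hK : Fintype.card K = (Fintype.card F ^ r) ^ 2) (hf : f ≠ 0)
    (hcop : (orderOf χ).Coprime f.natTrailingDegree) (z : ℂ) :
    orderOf χ * #{x : K | f.eval x ≠ 0 ∧ χ (Algebra.norm F (f.eval x)) = z} ≤
      (Fintype.card F ^ r) ^ 2 +
        5 * orderOf χ ^ 2 * (f.natDegree + 3) * Fintype.card F ^ r := by
  set q := Fintype.card F with hq
  set ℓ := orderOf χ
  set s := q ^ r with hs
  obtain ⟨p, _, n, hp, hqp⟩ := FiniteField.card' F
  have : Fact p.Prime := ⟨hp⟩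
  have : CharP K p := charP_of_injective_algebraMap (algebraMap F K).injective p
  have hq1 : 1 < q := Fintype.one_lt_card
  have hs1 : 1 ≤ s := Nat.one_le_pow _ _ (by omega)
  obtain ⟨t, ht⟩ : ℓ ∣ q - 1 := MulChar.orderOf_dvd_card_sub_one F χ
  obtain ⟨u, hu⟩ : q - 1 ∣ s - 1 := by simpa using Nat.sub_dvd_pow_sub_pow q 1 r
  have hsℓ : s = ℓ * (t * u) + 1 := by rw [← mul_assoc, ← ht, ← hu, Nat.sub_add_cancel hs1]
  have hexp : (Nat.card K - 1) / (Nat.card F - 1) * t = t * u * (s + 1) := by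
    have hfactor : s ^ 2 - 1 = (q - 1) * (u * (s + 1)) := by
      rw [← mul_assoc, ← hu, mul_comm, ← Nat.sq_sub_sq, one_pow]
    rw [Nat.card_eq_fintype_card, Nat.card_eq_fintype_card, hK, ← hq, hfactor,
      Nat.mul_div_cancel_left _ (by omega)]
    ring
  rcases eq_empty_or_nonempty {x : K | f.eval x ≠ 0 ∧ χ (Algebra.norm F (f.eval x)) = z}
    with hempty | ⟨x₀, hmem⟩
  · simp [hempty]
  obtain ⟨hx₀, rfl⟩ := (mem_filter.1 hmem).2
  refine (Nat.mul_le_mul_left _ (card_le_card fun x hx => ?_)).trans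
    (mul_card_eval_pow_eq_le (p := p) (r := n * r) (by rw [hs, hq, hqp, pow_mul]) hK hsℓ
      (MulChar.orderOf_pos χ) hf hcop (f.eval x₀ ^ (t * u * (s + 1))))
  obtain ⟨hx, hχ⟩ := (mem_filter.1 hx).2
  refine mem_filter.2 ⟨mem_univ x, hx, ?_⟩
  have hdiv : Algebra.norm F (f.eval x / f.eval x₀) ^ t = 1 := by
    refine pow_eq_one_of_mulChar_apply_eq_one ht.dvd ?_ ?_
    · exact Algebra.norm_ne_zero_iff.2 (div_ne_zero hx hx₀)
    · have hN : χ (Algebra.norm F (f.eval x₀)) ≠ 0 :=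
        MulChar.apply_ne_zero_iff.2 (Algebra.norm_ne_zero_iff.2 hx₀).isUnit
      rw [← mul_eq_right₀ hN, ← map_mul, ← map_mul, div_mul_cancel₀ _ hx₀, hχ]
  have hpow := congrArg (algebraMap F K) hdiv
  rwa [map_pow, FiniteField.algebraMap_norm_eq_pow, ← pow_mul, hexp, map_one, div_pow,
    div_eq_one_iff_eq (pow_ne_zero _ hx₀)] at hpow

theorem norm_sum_mulChar_norm_le_of_natTrailingDegree (hχ : χ ≠ 1)
    (hK : Fintype.card K = (Fintype.card F ^ r) ^ 2) (hf : f ≠ 0)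
    (hcop : (orderOf χ).Coprime f.natTrailingDegree) :
    ‖∑ x : K, χ (Algebra.norm F (f.eval x))‖ ≤
      6 * orderOf χ ^ 2 * (f.natDegree + 3) * (Fintype.card F : ℝ) ^ r := by
  classical
  set ℓ := orderOf χ
  set s : ℝ := (Fintype.card F : ℝ) ^ r with hs
  set D := f.natDegree
  have hℓ0 : 0 < ℓ := MulChar.orderOf_pos χ
  have hℓ1 : 1 < ℓ := lt_of_le_of_ne hℓ0 fun h => hχ (orderOf_eq_one_iff.1 h.symm)
  set U : Finset K := {x | f.eval x ≠ 0}
  have hsum : ∑ x : K, χ (Algebra.norm F (f.eval x)) =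
      ∑ x ∈ U, χ (Algebra.norm F (f.eval x)) := by
    refine (sum_subset (subset_univ U) fun x _ hx => ?_).symm
    have hfx : f.eval x = 0 := by simpa [U] using hx
    rw [hfx, Algebra.norm_zero, MulChar.map_zero]
  have hroots : ∀ x ∈ U, χ (Algebra.norm F (f.eval x)) ^ ℓ = 1 := fun x hx => by
    have hunit := (Algebra.norm_ne_zero_iff (R := F).2 (mem_filter.1 hx).2).isUnit
    rw [← MulChar.pow_apply' _ hℓ0.ne', pow_orderOf_eq_one, MulChar.one_apply hunit]
  have hlevel (z : ℂ) : (#{x ∈ U | χ (Algebra.norm F (f.eval x)) = z} : ℝ) ≤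
      (s ^ 2 + 5 * ℓ ^ 2 * (D + 3) * s) / ℓ := by
    rw [le_div_iff₀' (by exact_mod_cast hℓ0), filter_filter, hs]
    exact_mod_cast orderOf_mul_card_mulChar_norm_eq_le hK hf hcop z
  have hcard : s ^ 2 - D ≤ #U := by
    rw [sub_le_iff_le_add, hs]
    exact_mod_cast hK.ge.trans (card_le_card_eval_ne_zero_add_natDegree hf)
  have hs1 : 1 ≤ s := one_le_pow₀ (by exact_mod_cast Fintype.card_pos)
  have hℓ1' : (1 : ℝ) ≤ ℓ ^ 2 := one_le_pow₀ (by exact_mod_cast hℓ0)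
  calc _ ≤ ℓ * ((s ^ 2 + 5 * ℓ ^ 2 * (D + 3) * s) / ℓ) - #U :=
        hsum ▸ norm_sum_le_of_card_level_set_le hℓ1 hroots hlevel
    _ = s ^ 2 + 5 * ℓ ^ 2 * (D + 3) * s - #U := by
        rw [mul_div_cancel₀ _ (by exact_mod_cast hℓ0.ne')]
    _ ≤ 1 * D * 1 + 5 * ℓ ^ 2 * (D + 3) * s := by linarith
    _ ≤ ℓ ^ 2 * (D + 3) * s + 5 * ℓ ^ 2 * (D + 3) * s := by gcongr; linarith
    _ = _ := by ring

theorem norm_sum_mulChar_norm_le (hχ : χ ≠ 1)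
    (hK : Fintype.card K = (Fintype.card F ^ r) ^ 2) (hf : f ≠ 0) {a : K}
    (hcop : (orderOf χ).Coprime (f.rootMultiplicity a)) :
    ‖∑ x : K, χ (Algebra.norm F (f.eval x))‖ ≤
      6 * orderOf χ ^ 2 * (f.natDegree + 3) * (Fintype.card F : ℝ) ^ r := by
  rw [rootMultiplicity_eq_natTrailingDegree] at hcop
  have htranslate : ∑ x : K, χ (Algebra.norm F (f.eval x)) =
      ∑ x : K, χ (Algebra.norm F ((f.comp (X + C a)).eval x)) :=
    (Fintype.sum_equiv (Equiv.addRight a) _ _ fun x => by simp).symm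
  rw [htranslate, ← natDegree_taylor f a]
  exact norm_sum_mulChar_norm_le_of_natTrailingDegree hχ hK
    (comp_X_add_C_ne_zero_iff.2 hf) hcop

end CharacterSums

section PowerSums

theorem le_of_forall_pow_le_mul_pow {x y C : ℝ} (hy : 0 ≤ y)
    (h : ∀ r ≠ 0, x ^ r ≤ C * y ^ r) : x ≤ y := by
  by_contra! hyx
  have hx : 0 < x := hy.trans_lt hyx
  have hle : ∀ᶠ r in Filter.atTop, 1 ≤ C * (y / x) ^ r := by
    filter_upwards [Filter.eventually_ne_atTop 0] with r hr
    rw [div_pow, ← mul_div_assoc, one_le_div (pow_pos hx r)]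
    exact h r hr
  have hlim : Filter.Tendsto (fun r : ℕ => C * (y / x) ^ r) Filter.atTop (nhds (C * 0)) :=
    (tendsto_pow_atTop_nhds_zero_of_lt_one (div_nonneg hy hx.le)
      ((div_lt_one hx).2 hyx)).const_mul C
  exact absurd (ge_of_tendsto hlim hle) (by norm_num)

theorem norm_le_of_forall_norm_sum_pow_le {ι K : Type*} [Fintype ι] [NormedField K] [CharZero K]
    {β : ι → K} {q B : ℝ} (hq : 0 ≤ q) (h : ∀ r ≠ 0, ‖∑ i, β i ^ r‖ ≤ B * q ^ r) (i : ι) :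
    ‖β i‖ ≤ q := by
  classical
  -- A linear combination of shifted power sums isolates the powers of `β i`.
  set p : K[X] := ∏ c ∈ (univ.image β).erase (β i), (X - C c) with hp
  have hpi : p.eval (β i) ≠ 0 := by
    simp only [hp, eval_prod, eval_sub, eval_X, eval_C]
    exact prod_ne_zero_iff.2 fun c hc => sub_ne_zero.2 (ne_of_mem_erase hc).symm
  have hpj {j : ι} (hj : β j ≠ β i) : p.eval (β j) = 0 := by
    simp only [hp, eval_prod, eval_sub, eval_X, eval_C]
    exact prod_eq_zero (mem_erase.2 ⟨hj, mem_image_of_mem β (mem_univ j)⟩) (sub_self _)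
  set m : K := #{j | β j = β i} * p.eval (β i) with hm
  have hm0 : m ≠ 0 := by
    refine mul_ne_zero (Nat.cast_ne_zero.2 (card_ne_zero_of_mem (a := i) ?_)) hpi
    exact mem_filter.2 ⟨mem_univ i, rfl⟩
  have hisolate (r : ℕ) :
      m * β i ^ r = ∑ k ∈ range (p.natDegree + 1), p.coeff k * ∑ j, β j ^ (k + r) := by
    calc m * β i ^ r = ∑ j, p.eval (β j) * β j ^ r := by
          rw [← sum_filter_add_sum_filter_not _ (fun j => β j = β i),
            sum_eq_zero (s := univ.filter fun j => ¬ β j = β i), add_zero, hm, mul_assoc,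
            ← nsmul_eq_mul, ← sum_const]
          · exact sum_congr rfl fun j hj => by rw [(mem_filter.1 hj).2]
          · exact fun j hj => by rw [hpj (mem_filter.1 hj).2, zero_mul]
      _ = _ := by
          simp only [eval_eq_sum_range, sum_mul, mul_sum, mul_assoc, ← pow_add]
          exact sum_comm
  refine le_of_forall_pow_le_mul_pow (C := (∑ k ∈ range (p.natDegree + 1),
    ‖p.coeff k‖ * (B * q ^ k)) / ‖m‖) hq fun r hr => ?_
  rw [div_mul_eq_mul_div, le_div_iff₀' (norm_pos_iff.2 hm0), ← norm_pow, ← norm_mul, hisolate,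
    sum_mul]
  refine norm_sum_le_of_le _ fun k _ => ?_
  rw [norm_mul, mul_assoc, mul_assoc, ← pow_add]
  exact mul_le_mul_of_nonneg_left (h _ (by omega)) (norm_nonneg _)

theorem eq_of_forall_sum_mul_eq {R : Type*} [Ring R] {c S T : ℕ → R} (h0 : c 0 = 1)
    (h : ∀ k, ∑ j ∈ range k, c j * S (k - j) = ∑ j ∈ range k, c j * T (k - j)) :
    ∀ k ≠ 0, S k = T k := by
  intro k
  induction k using Nat.strong_induction_on with
  | _ k ih =>
    intro hk
    obtain ⟨n, rfl⟩ := Nat.exists_eq_succ_of_ne_zero hk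
    have htail : ∑ j ∈ range n, c (j + 1) * S (n + 1 - (j + 1)) =
        ∑ j ∈ range n, c (j + 1) * T (n + 1 - (j + 1)) := sum_congr rfl fun j hj => by
      have := mem_range.1 hj
      rw [ih _ (by omega) (by omega)]
    have hstep := h (n + 1)
    rw [sum_range_succ', sum_range_succ', htail, h0, one_mul, one_mul] at hstep
    exact add_left_cancel hstep

theorem natCast_mul_esymm_eq_neg_sum {σ R : Type*} [Fintype σ] [CommRing R] (α : σ → R) (k : ℕ) :
    k * ((-1) ^ k * MvPolynomial.aeval α (MvPolynomial.esymm σ R k)) =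
      ∑ j ∈ range k, (-1) ^ j * MvPolynomial.aeval α (MvPolynomial.esymm σ R j) *
        -∑ i, α i ^ (k - j) := by
  have hnewton := congrArg (MvPolynomial.aeval α) (MvPolynomial.mul_esymm_eq_sum σ R k)
  have hindex : {a ∈ antidiagonal k | a.1 < k} = (range k).image fun j => (j, k - j) := by
    ext ⟨i, j⟩
    simp only [mem_filter, HasAntidiagonal.mem_antidiagonal, mem_image, mem_range, Prod.mk.injEq]
    exact ⟨fun h => ⟨i, h.2, rfl, by omega⟩, fun ⟨a, _, hi, hj⟩ => by omega⟩
  rw [hindex, sum_image fun i _ j _ hij => (Prod.mk.inj hij).1] at hnewton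
  simp only [map_mul, map_sum, map_pow, map_neg, map_one, map_natCast, MvPolynomial.psum,
    MvPolynomial.aeval_X] at hnewton
  rw [mul_left_comm, hnewton, ← mul_assoc, ← pow_add, Odd.neg_one_pow ⟨k, by ring⟩, neg_one_mul,
    ← sum_neg_distrib]
  exact sum_congr rfl fun j _ => (mul_neg _ _).symm

theorem exists_univ_map_eq_of_card_eq {α : Type*} {s : Multiset α} {d : ℕ} (h : s.card = d) :
    ∃ f : Fin d → α, univ.val.map f = s := by
  subst h
  induction s using Quotient.inductionOn with
  | _ l => exact ⟨l.get, (Fin.univ_val_map l.get).trans (congrArg _ (List.ofFn_get l))⟩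

theorem exists_coeff_eq_esymm {K : Type*} [Field K] [IsAlgClosed K] {c : ℕ → K} {d : ℕ}
    (h0 : c 0 = 1) (hd : ∀ k, d < k → c k = 0) :
    ∃ α : Fin d → K, ∀ k,
      c k = (-1) ^ k * MvPolynomial.aeval α (MvPolynomial.esymm (Fin d) K k) := by
  set p : K[X] := ∑ k ∈ range (d + 1), C (c k) * X ^ (d - k) with hp
  have hcoeff {k : ℕ} (hk : k ≤ d) : p.coeff (d - k) = c k := by
    simp only [hp, finsetSum_coeff, coeff_C_mul_X_pow]
    rw [sum_eq_single_of_mem k (mem_range.2 (by omega)), if_pos rfl]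
    exact fun j hj hjk => if_neg (by have := mem_range.1 hj; omega)
  have hdeg : p.natDegree ≤ d := natDegree_sum_le_of_forall_le _ _ fun k _ =>
    (natDegree_C_mul_X_pow_le _ _).trans (Nat.sub_le d k)
  have hlead : p.coeff d = 1 := by simpa [h0] using hcoeff (Nat.zero_le d)
  have hmonic : p.Monic := monic_of_natDegree_le_of_coeff_eq_one d hdeg hlead
  have hnat : p.natDegree = d := natDegree_eq_of_le_of_coeff_ne_zero hdeg (by simp [hlead])
  have hsplits : p.Splits := IsAlgClosed.splits p
  obtain ⟨α, hα⟩ := exists_univ_map_eq_of_card_eq (hsplits.natDegree_eq_card_roots.symm.trans hnat)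
  refine ⟨α, fun k => ?_⟩
  rw [MvPolynomial.aeval_esymm_eq_multiset_esymm, hα]
  rcases le_or_gt k d with hk | hk
  · rw [← hcoeff hk, coeff_eq_esymm_roots_of_splits hsplits (by omega), hmonic.leadingCoeff,
      one_mul, hnat, Nat.sub_sub_self hk]
  · rw [hd k hk, Multiset.esymm, Multiset.powersetCard_eq_empty]
    · simp
    · rwa [← hsplits.natDegree_eq_card_roots, hnat]

theorem exists_eq_neg_sum_pow {K : Type*} [Field K] [IsAlgClosed K] {c S : ℕ → K} {d : ℕ}
    (h0 : c 0 = 1) (hd : ∀ k, d < k → c k = 0)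
    (hnewton : ∀ k : ℕ, k * c k = ∑ j ∈ range k, c j * S (k - j)) :
    ∃ α : Fin d → K, ∀ k ≠ 0, S k = -∑ i, α i ^ k := by
  obtain ⟨α, hα⟩ := exists_coeff_eq_esymm h0 hd
  refine ⟨α, eq_of_forall_sum_mul_eq h0 fun k => ?_⟩
  rw [← hnewton k]
  simpa only [hα] using natCast_mul_esymm_eq_neg_sum α k

theorem norm_coeff_one_le_of_norm_even_le {c S : ℕ → ℂ} {d : ℕ} {q B : ℝ} (hq : 0 ≤ q)
    (h0 : c 0 = 1) (hd : ∀ k, d < k → c k = 0)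
    (hnewton : ∀ k : ℕ, k * c k = ∑ j ∈ range k, c j * S (k - j))
    (hB : ∀ r ≠ 0, ‖S (2 * r)‖ ≤ B * q ^ r) : ‖c 1‖ ≤ d * √q := by
  obtain ⟨α, hα⟩ := exists_eq_neg_sum_pow h0 hd hnewton
  have hroot (i : Fin d) : ‖α i‖ ≤ √q := by
    refine Real.le_sqrt_of_sq_le ?_
    rw [← norm_pow]
    refine norm_le_of_forall_norm_sum_pow_le (β := fun i => α i ^ 2) (B := B) hq (fun r hr => ?_) i
    simpa only [← pow_mul, hα (2 * r) (by omega), norm_neg] using hB r hr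
  have hc1 : c 1 = -∑ i, α i := by
    simpa [h0, hα 1 one_ne_zero] using hnewton 1
  calc ‖c 1‖ ≤ ∑ _i : Fin d, √q := by
        rw [hc1, norm_neg]
        exact norm_sum_le_of_le _ fun i _ => hroot i
    _ = d * √q := by simp

end PowerSums

section LFunction

theorem norm_eq_minpoly_coeff_zero_pow {F K : Type*} [Field F] [Field K] [Algebra F K]
    [FiniteDimensional F K] (x : K) :
    Algebra.norm F x = ((-1) ^ (minpoly F x).natDegree * (minpoly F x).coeff 0) ^
      (Module.finrank F K / (minpoly F x).natDegree) := by
  have hx : IsIntegral F x := IsIntegral.of_finite F x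
  have hfinrank := Module.finrank_mul_finrank F (IntermediateField.adjoin F {x}) K
  rw [IntermediateField.adjoin.finrank hx] at hfinrank
  have hgen := Algebra.PowerBasis.norm_gen_eq_coeff_zero_minpoly
    (IntermediateField.adjoin.powerBasis hx)
  rw [IntermediateField.adjoin.powerBasis_gen, IntermediateField.adjoin.powerBasis_dim,
    IntermediateField.minpoly_gen] at hgen
  rw [Algebra.norm_eq_norm_adjoin, hgen, ← hfinrank,
    Nat.mul_div_cancel_left _ (minpoly.natDegree_pos hx)]

theorem norm_sub_algebraMap {F K : Type*} [Field F] [Field K] [Algebra F K]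
    [FiniteDimensional F K] (x : K) (a : F) :
    Algebra.norm F (x - algebraMap F K a) = (-1) ^ Module.finrank F K *
      (minpoly F x).eval a ^ (Module.finrank F K / (minpoly F x).natDegree) := by
  have hdvd := minpoly.degree_dvd (IsIntegral.of_finite F x)
  rw [norm_eq_minpoly_coeff_zero_pow, minpoly.sub_algebraMap, natDegree_comp, natDegree_X_add_C,
    mul_one, coeff_zero_eq_eval_zero, eval_comp, eval_add, eval_X, eval_C, zero_add, mul_pow,
    ← pow_mul, Nat.mul_div_cancel' hdvd]

theorem card_filter_minpoly_eq {F K : Type*} [Field F] [Fintype K] [Field K] [Finite F]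
    [Algebra F K] [DecidableEq F[X]] {P : F[X]} (hmonic : P.Monic) (hirr : Irreducible P)
    (hdvd : P.natDegree ∣ Module.finrank F K) :
    #{x : K | minpoly F x = P} = P.natDegree := by
  classical
  have hPdvd : P.map (algebraMap F K) ∣ X ^ Fintype.card K - X := by
    have := Polynomial.map_dvd (algebraMap F K)
      (hirr.natDegree_dvd_iff_dvd_X_pow_card_pow_sub_X.1 hdvd)
    rwa [← Module.natCard_eq_pow_finrank, Nat.card_eq_fintype_card, Polynomial.map_sub,
      Polynomial.map_pow, map_X] at this
  have hne : (X ^ Fintype.card K - X : K[X]) ≠ 0 :=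
    FiniteField.X_pow_card_sub_X_ne_zero K Fintype.one_lt_card
  have hsplits : (P.map (algebraMap F K)).Splits := by
    refine Splits.of_dvd (splits_iff_card_roots.2 ?_) hne hPdvd
    rw [FiniteField.roots_X_pow_card_sub_X,
      FiniteField.X_pow_card_sub_X_natDegree_eq K Fintype.one_lt_card]
    rfl
  have hnodup : (P.map (algebraMap F K)).roots.Nodup :=
    nodup_roots (PerfectField.separable_of_irreducible hirr).map
  rw [← natDegree_map (algebraMap F K), hsplits.natDegree_eq_card_roots,
    ← Multiset.toFinset_card_of_nodup hnodup]
  congr 1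
  ext x
  rw [Multiset.mem_toFinset, mem_roots (Polynomial.map_ne_zero hmonic.ne_zero), IsRoot.def,
    eval_map_algebraMap, mem_filter_univ]
  exact ⟨fun h => h ▸ minpoly.aeval F x,
    fun h => (minpoly.eq_of_irreducible_of_monic hirr h hmonic).symm⟩

variable {F : Type*} [Field F] [Finite F]

theorem finite_setOf_monic_natDegree_eq (F : Type*) [Field F] [Finite F] (k : ℕ) :
    {g : F[X] | g.Monic ∧ g.natDegree = k}.Finite := by
  classical
  refine (Set.finite_range (ofFn (R := F) (k + 1))).subset ?_
  rintro g ⟨-, hg⟩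
  exact ⟨toFn (k + 1) g, ofFn_comp_toFn_eq_id_of_natDegree_lt (by omega)⟩

/-- The finite set of monic polynomials of degree `k` over a finite field. -/
noncomputable def monicsOfDegree (F : Type*) [Field F] [Finite F] (k : ℕ) : Finset F[X] :=
  (finite_setOf_monic_natDegree_eq F k).toFinset

@[simp]
theorem mem_monicsOfDegree {k : ℕ} {g : F[X]} :
    g ∈ monicsOfDegree F k ↔ g.Monic ∧ g.natDegree = k := by
  simp [monicsOfDegree]

open Classical in
/-- The pairs `(P, r)` with `P` monic irreducible, `r ≠ 0` and `P ^ r` of degree `k`: they encode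
the monic prime powers of degree `k` over a finite field. -/
noncomputable def primePowersOfDegree (F : Type*) [Field F] [Finite F] (k : ℕ) :
    Finset (F[X] × ℕ) :=
  {x ∈ (Icc 1 k).biUnion (monicsOfDegree F) ×ˢ Icc 1 k |
    Irreducible x.1 ∧ x.2 * x.1.natDegree = k}

@[simp]
theorem mem_primePowersOfDegree {k r : ℕ} {P : F[X]} :
    (P, r) ∈ primePowersOfDegree F k ↔
      P.Monic ∧ Irreducible P ∧ r ≠ 0 ∧ r * P.natDegree = k := by
  simp only [primePowersOfDegree, mem_filter, mem_product, mem_biUnion, mem_Icc,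
    mem_monicsOfDegree]
  refine ⟨fun ⟨⟨⟨_, _, hP, _⟩, hr, _⟩, hirr, hk⟩ => ⟨hP, hirr, Nat.one_le_iff_ne_zero.1 hr, hk⟩,
    fun ⟨hP, hirr, _, hk⟩ => ?_⟩
  have hpos := hirr.natDegree_pos
  refine ⟨⟨⟨_, ⟨hpos, ?_⟩, hP, rfl⟩, by omega, ?_⟩, hirr, hk⟩
  · exact hk ▸ Nat.le_mul_of_pos_left _ (by omega)
  · exact hk ▸ Nat.le_mul_of_pos_right _ hpos

section Factorization

open UniqueFactorizationMonoid

open Classical in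
theorem monic_of_mem_normalizedFactors {F : Type*} [Field F] {P g : F[X]}
    (hP : P ∈ normalizedFactors g) : P.Monic := by
  rw [← normalize_normalized_factor P hP]
  exact monic_normalize (irreducible_of_normalized_factor P hP).ne_zero

open Classical in
theorem pow_dvd_iff_le_count_normalizedFactors {F : Type*} [Field F] {P g : F[X]} (hP : P.Monic)
    (hirr : Irreducible P) (hg : g ≠ 0) (r : ℕ) :
    P ^ r ∣ g ↔ r ≤ (normalizedFactors g).count P := by
  rw [pow_dvd_iff_le_emultiplicity, emultiplicity_eq_count_normalizedFactors hirr hg,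
    hP.normalize_eq_self, Nat.cast_le]

open Classical in
theorem natDegree_eq_sum_count_normalizedFactors {F : Type*} [Field F] {g : F[X]}
    (hg : g.Monic) : g.natDegree =
      ∑ P ∈ (normalizedFactors g).toFinset, (normalizedFactors g).count P • P.natDegree := by
  rw [← Finset.sum_multiset_map_count,
    ← natDegree_multiset_prod_of_monic _ fun _ => monic_of_mem_normalizedFactors,
    prod_normalizedFactors_eq hg.ne_zero, hg.normalize_eq_self]

open Classical in
theorem natDegree_eq_sum_primePowersOfDegree {g : F[X]} (hg : g.Monic) :
    g.natDegree = ∑ j ∈ range g.natDegree,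
      ∑ x ∈ primePowersOfDegree F (g.natDegree - j) with x.1 ^ x.2 ∣ g, x.1.natDegree := by
  calc g.natDegree = ∑ P ∈ (normalizedFactors g).toFinset,
        (normalizedFactors g).count P • P.natDegree :=
          natDegree_eq_sum_count_normalizedFactors hg
    _ = ∑ P ∈ (normalizedFactors g).toFinset,
        ∑ _r ∈ Icc 1 ((normalizedFactors g).count P), P.natDegree := by
        simp only [sum_const, Nat.card_Icc, Nat.add_sub_cancel]
    _ = _ := by
        rw [sum_sigma', sum_sigma']
        refine sum_bij' (fun x _ => ⟨g.natDegree - x.2 * x.1.natDegree, x.1, x.2⟩)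
          (fun y _ => ⟨y.2.1, y.2.2⟩) ?_ ?_ (fun _ _ => rfl) ?_ (fun _ _ => rfl)
        · rintro ⟨P, r⟩ hx
          simp only [mem_sigma, Multiset.mem_toFinset, mem_Icc] at hx
          obtain ⟨hP, hr, hcount⟩ := hx
          have hP' := monic_of_mem_normalizedFactors hP
          have hirr := irreducible_of_normalized_factor P hP
          have hPr := (pow_dvd_iff_le_count_normalizedFactors hP' hirr hg.ne_zero r).2 hcount
          have hle := natDegree_le_of_dvd hPr hg.ne_zero
          have hpos := Nat.mul_pos hr hirr.natDegree_pos
          rw [natDegree_pow] at hle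
          simp only [mem_sigma, mem_range, mem_filter, mem_primePowersOfDegree]
          exact ⟨by omega, ⟨hP', hirr, by omega, by omega⟩, hPr⟩
        · rintro ⟨j, P, r⟩ hy
          simp only [mem_sigma, mem_range, mem_filter, mem_primePowersOfDegree] at hy
          obtain ⟨-, ⟨hP, hirr, hr, -⟩, hPr⟩ := hy
          have hcount := (pow_dvd_iff_le_count_normalizedFactors hP hirr hg.ne_zero r).1 hPr
          simp only [mem_sigma, Multiset.mem_toFinset, mem_Icc]
          exact ⟨Multiset.count_pos.1 (by omega), by omega, hcount⟩
        · rintro ⟨j, P, r⟩ hy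
          simp only [mem_sigma, mem_range, mem_filter, mem_primePowersOfDegree] at hy
          rw [hy.2.1.2.2.2, Nat.sub_sub_self hy.1.le]

end Factorization

/-- The coefficients of the `L`-function `∑ ψ(g) t ^ deg g`, summed over monic `g`, of a
multiplicative function `ψ` on the polynomials over a finite field. -/
noncomputable def lCoeff {R : Type*} [CommRing R] (ψ : F[X] →* R) (k : ℕ) : R :=
  ∑ g ∈ monicsOfDegree F k, ψ g

/-- The coefficients of `t L'(t) / L(t)` for the `L`-function of a multiplicative function `ψ`. -/
noncomputable def lPowerSum {R : Type*} [CommRing R] (ψ : F[X] →* R) (k : ℕ) : R :=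
  ∑ x ∈ primePowersOfDegree F k, x.1.natDegree * ψ x.1 ^ x.2

theorem lCoeff_zero {R : Type*} [CommRing R] (ψ : F[X] →* R) : lCoeff ψ 0 = 1 := by
  have hmonics : monicsOfDegree F 0 = {1} := by
    ext g
    rw [mem_monicsOfDegree, mem_singleton]
    exact ⟨fun h => h.1.natDegree_eq_zero.1 h.2, fun h => h ▸ ⟨monic_one, natDegree_one⟩⟩
  rw [lCoeff, hmonics, sum_singleton, map_one]

theorem lCoeff_one {F R : Type*} [Field F] [Fintype F] [CommRing R] (ψ : F[X] →* R) :
    lCoeff ψ 1 = ∑ x : F, ψ (X + C x) := by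
  symm
  refine sum_bij (fun x _ => X + C x) ?_ ?_ ?_ fun _ _ => rfl
  · exact fun x _ => mem_monicsOfDegree.2 ⟨monic_X_add_C x, natDegree_X_add_C x⟩
  · exact fun x _ y _ h => C_injective (add_left_cancel h)
  · intro g hg
    obtain ⟨hmonic, hdeg⟩ := mem_monicsOfDegree.1 hg
    exact ⟨g.coeff 0, mem_univ _, (hmonic.eq_X_add_C hdeg).symm⟩

theorem sum_monicsOfDegree_filter_dvd {R : Type*} [CommRing R] [DecidableRel (α := F[X]) (· ∣ ·)]
    (ψ : F[X] →* R) {Q : F[X]} (hQ : Q.Monic) (j : ℕ) :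
    ∑ g ∈ monicsOfDegree F (Q.natDegree + j) with Q ∣ g, ψ g = ψ Q * lCoeff ψ j := by
  rw [lCoeff, mul_sum]
  symm
  refine sum_bij (fun h _ => Q * h) ?_ ?_ ?_ fun h _ => (map_mul ψ Q h).symm
  · intro h hh
    obtain ⟨hmonic, hdeg⟩ := mem_monicsOfDegree.1 hh
    exact mem_filter.2 ⟨mem_monicsOfDegree.2
      ⟨hQ.mul hmonic, by rw [hQ.natDegree_mul hmonic, hdeg]⟩, dvd_mul_right Q h⟩
  · exact fun h _ h' _ heq => mul_left_cancel₀ hQ.ne_zero heq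
  · intro g hg
    obtain ⟨hg, h, rfl⟩ := mem_filter.1 hg
    obtain ⟨hmonic, hdeg⟩ := mem_monicsOfDegree.1 hg
    have hh := hQ.of_mul_monic_left hmonic
    rw [hQ.natDegree_mul hh] at hdeg
    exact ⟨h, mem_monicsOfDegree.2 ⟨hh, Nat.add_left_cancel hdeg⟩, rfl⟩

theorem natCast_mul_lCoeff {R : Type*} [CommRing R] (ψ : F[X] →* R) (k : ℕ) :
    k * lCoeff ψ k = ∑ j ∈ range k, lCoeff ψ j * lPowerSum ψ (k - j) := by
  classical
  calc k * lCoeff ψ k = ∑ g ∈ monicsOfDegree F k, ∑ j ∈ range k,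
        ∑ x ∈ primePowersOfDegree F (k - j) with x.1 ^ x.2 ∣ g, x.1.natDegree * ψ g := by
        rw [lCoeff, mul_sum]
        refine sum_congr rfl fun g hg => ?_
        obtain ⟨hmonic, rfl⟩ := mem_monicsOfDegree.1 hg
        conv_lhs => rw [natDegree_eq_sum_primePowersOfDegree hmonic]
        simp only [Nat.cast_sum, sum_mul]
    _ = ∑ j ∈ range k, ∑ x ∈ primePowersOfDegree F (k - j),
        x.1.natDegree * ∑ g ∈ monicsOfDegree F k with x.1 ^ x.2 ∣ g, ψ g := by
        simp only [sum_filter, mul_sum, mul_ite, mul_zero]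
        rw [sum_comm]
        exact sum_congr rfl fun j _ => sum_comm
    _ = _ := by
        refine sum_congr rfl fun j hj => ?_
        rw [lPowerSum, mul_sum]
        refine sum_congr rfl fun ⟨P, r⟩ hP => ?_
        obtain ⟨hmonic, -, -, hdeg⟩ := mem_primePowersOfDegree.1 hP
        have hk : k = (P ^ r).natDegree + j := by
          rw [natDegree_pow, hdeg, Nat.sub_add_cancel (mem_range.1 hj).le]
        rw [hk, sum_monicsOfDegree_filter_dvd ψ (hmonic.pow r), map_pow]
        ring

theorem lPowerSum_finrank {R : Type*} [CommRing R] (ψ : F[X] →* R) (K : Type*) [Field K]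
    [Fintype K] [Algebra F K] :
    lPowerSum ψ (Module.finrank F K) = ∑ x : K,
      ψ (minpoly F x) ^ (Module.finrank F K / (minpoly F x).natDegree) := by
  classical
  have hint (x : K) : IsIntegral F x := IsIntegral.of_finite F x
  have hmaps (x : K) : (minpoly F x, Module.finrank F K / (minpoly F x).natDegree) ∈
      primePowersOfDegree F (Module.finrank F K) :=
    mem_primePowersOfDegree.2 ⟨minpoly.monic (hint x), minpoly.irreducible (hint x),
      (Nat.div_pos (minpoly.natDegree_le x) (minpoly.natDegree_pos (hint x))).ne',
      Nat.div_mul_cancel (minpoly.degree_dvd (hint x))⟩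
  rw [← sum_fiberwise_of_maps_to (fun x _ => hmaps x), lPowerSum]
  refine sum_congr rfl fun ⟨P, r⟩ hP => ?_
  obtain ⟨hmonic, hirr, -, hdeg⟩ := mem_primePowersOfDegree.1 hP
  have hr : r = Module.finrank F K / P.natDegree := by
    rw [← hdeg, Nat.mul_div_cancel _ hirr.natDegree_pos]
  have hfiber : ({x | (minpoly F x, Module.finrank F K / (minpoly F x).natDegree) = (P, r)} :
      Finset K) = ({x | minpoly F x = P} : Finset K) := by
    simp only [Prod.mk.injEq]
    exact filter_congr fun x _ => and_iff_left_of_imp fun h => by rw [h, hr]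
  rw [hfiber, ← card_filter_minpoly_eq (K := K) hmonic hirr ⟨r, by rw [← hdeg, mul_comm]⟩,
    ← nsmul_eq_mul, ← sum_const]
  exact sum_congr rfl fun x hx => by rw [(mem_filter.1 hx).2, ← hr]

/-- The completely multiplicative function `g ↦ ∏ a ∈ T, χ (g a)` on polynomials. -/
noncomputable def evalMulChar {F R : Type*} [Field F] [CommRing R] (χ : MulChar F R)
    (T : Finset F) : F[X] →* R where
  toFun g := ∏ a ∈ T, χ (g.eval a)
  map_one' := by simp
  map_mul' f g := by simp [prod_mul_distrib]

theorem evalMulChar_apply {F R : Type*} [Field F] [CommRing R] (χ : MulChar F R)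
    (T : Finset F) (g : F[X]) : evalMulChar χ T g = ∏ a ∈ T, χ (g.eval a) := rfl

theorem sum_evalMulChar_add_C_mul_eq_zero {F R : Type*} [Field F] [Fintype F] [CommRing R]
    [IsDomain R] [DecidableEq F] {χ : MulChar F R} (hχ : χ ≠ 1) {T : Finset F} {a₀ : F}
    (ha₀ : a₀ ∈ T) {h : F[X]} (hh : ∀ a ∈ T, h.eval a = if a = a₀ then 1 else 0) (g : F[X]) :
    ∑ v : F, evalMulChar χ T (g + C v * h) = 0 := by
  have hfactor (v : F) : evalMulChar χ T (g + C v * h) =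
      χ (v + g.eval a₀) * ∏ a ∈ T.erase a₀, χ (g.eval a) := by
    rw [evalMulChar_apply, ← mul_prod_erase T _ ha₀]
    congr 1
    · simp [hh a₀ ha₀, add_comm]
    · refine prod_congr rfl fun a ha => ?_
      simp [hh a (mem_of_mem_erase ha), ne_of_mem_erase ha]
  have htranslate : ∑ v : F, χ (v + g.eval a₀) = ∑ v : F, χ v :=
    Fintype.sum_equiv (Equiv.addRight (g.eval a₀)) _ _ fun _ => rfl
  rw [sum_congr rfl fun v _ => hfactor v, ← sum_mul, htranslate,
    MulChar.sum_eq_zero_of_ne_one hχ, zero_mul]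

theorem lCoeff_evalMulChar_eq_zero {R : Type*} [CommRing R] [IsDomain R] [CharZero R]
    {χ : MulChar F R} (hχ : χ ≠ 1) {T : Finset F} (hT : T.Nonempty) {k : ℕ} (hk : #T ≤ k) :
    lCoeff (evalMulChar χ T) k = 0 := by
  classical
  have := Fintype.ofFinite F
  obtain ⟨a₀, ha₀⟩ := hT
  -- Adding multiples of the interpolation polynomial `h` permutes the monic polynomials of
  -- degree `k` and moves their value at `a₀` only.
  set h : F[X] := Lagrange.interpolate T id fun a => if a = a₀ then 1 else 0
  have hinj : Set.InjOn (id : F → F) T := Set.injOn_id _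
  have heval (a : F) (ha : a ∈ T) : h.eval a = if a = a₀ then 1 else 0 :=
    Lagrange.eval_interpolate_at_node (v := id) _ hinj ha
  have hdeg (v : F) : (C v * h).degree < k :=
    (smul_eq_C_mul (p := h) v ▸ degree_smul_le v h).trans_lt <|
      (Lagrange.degree_interpolate_lt _ hinj).trans_le (by exact_mod_cast hk)
  have hmaps (v : F) (g : F[X]) (hg : g ∈ monicsOfDegree F k) :
      g + C v * h ∈ monicsOfDegree F k := by
    obtain ⟨hmonic, hg⟩ := mem_monicsOfDegree.1 hg
    have hlt : (C v * h).degree < g.degree := by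
      rw [degree_eq_natDegree hmonic.ne_zero, hg]
      exact hdeg v
    exact mem_monicsOfDegree.2
      ⟨hmonic.add_of_left hlt, by rw [natDegree_add_eq_left_of_degree_lt hlt, hg]⟩
  have hshift (v : F) : ∑ g ∈ monicsOfDegree F k, evalMulChar χ T (g + C v * h) =
      lCoeff (evalMulChar χ T) k :=
    sum_nbij' (fun g => g + C v * h) (fun g => g + C (-v) * h) (hmaps v) (hmaps (-v))
      (fun g _ => by simp) (fun g _ => by simp) fun _ _ => rfl
  have hmul : (Fintype.card F : R) * lCoeff (evalMulChar χ T) k = 0 := by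
    rw [← nsmul_eq_mul, ← card_univ, ← sum_const, ← sum_congr rfl fun v _ => hshift v, sum_comm]
    exact sum_eq_zero fun g _ => sum_evalMulChar_add_C_mul_eq_zero hχ ha₀ heval g
  exact (mul_eq_zero.1 hmul).resolve_left (Nat.cast_ne_zero.2 Fintype.card_ne_zero)

theorem lPowerSum_evalMulChar_finrank {R : Type*} [CommRing R] (χ : MulChar F R) (T : Finset F)
    (K : Type*) [Field K] [Fintype K] [Algebra F K] (hK : Even (Module.finrank F K)) :
    lPowerSum (evalMulChar χ T) (Module.finrank F K) =
      ∑ x : K, χ (Algebra.norm F ((∏ a ∈ T, (X - C (algebraMap F K a))).eval x)) := by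
  rw [lPowerSum_finrank]
  refine sum_congr rfl fun x _ => ?_
  simp only [evalMulChar_apply, eval_prod, eval_sub, eval_X, eval_C, map_prod,
    norm_sub_algebraMap, hK.neg_one_pow, one_mul, map_pow, prod_pow]

theorem norm_lPowerSum_evalMulChar_le {F : Type*} [Field F] [Fintype F] {χ : MulChar F ℂ}
    (hχ : χ ≠ 1) {T : Finset F} (hT : T.Nonempty) {r : ℕ} (hr : r ≠ 0) :
    ‖lPowerSum (evalMulChar χ T) (2 * r)‖ ≤
      6 * orderOf χ ^ 2 * (#T + 3) * (Fintype.card F : ℝ) ^ r := by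
  classical
  obtain ⟨a₀, ha₀⟩ := hT
  obtain ⟨p, hp⟩ := CharP.exists F
  have : Fact p.Prime := ⟨CharP.char_is_prime F p⟩
  have : NeZero (2 * r) := ⟨by omega⟩
  let K := FiniteField.Extension F p (2 * r)
  have : Fintype K := Fintype.ofFinite K
  have hfinrank : Module.finrank F K = 2 * r := FiniteField.finrank_extension F p (2 * r)
  have hcard : Fintype.card K = (Fintype.card F ^ r) ^ 2 := by
    rw [Module.card_eq_pow_finrank (K := F), hfinrank, ← pow_mul, mul_comm]
  set f : K[X] := ∏ a ∈ T, (X - C (algebraMap F K a)) with hf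
  have hdeg : f.natDegree = #T := natDegree_finsetProd_X_sub_C_eq_card T _
  let ι : F ↪ K := ⟨algebraMap F K, (algebraMap F K).injective⟩
  have hroots : f.roots = (T.map ι).val := by
    rw [← roots_prod_X_sub_C, prod_map]
    rfl
  have hmult : f.rootMultiplicity (algebraMap F K a₀) = 1 := by
    rw [← count_roots, hroots]
    exact Multiset.count_eq_one_of_mem (nodup _) (mem_map_of_mem ι ha₀)
  rw [← hfinrank, lPowerSum_evalMulChar_finrank χ T K ⟨r, by omega⟩, ← hf, ← hdeg]
  refine norm_sum_mulChar_norm_le hχ hcard ?_ (a := algebraMap F K a₀)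
    (hmult ▸ Nat.coprime_one_right _)
  exact (monic_prod_X_sub_C _ T).ne_zero

theorem norm_sum_prod_mulChar_le {F : Type*} [Field F] [Fintype F] {χ : MulChar F ℂ} (hχ : χ ≠ 1)
    {T : Finset F} (hT : T.Nonempty) :
    ‖∑ x : F, ∏ a ∈ T, χ (x + a)‖ ≤ (#T - 1) * √(Fintype.card F) := by
  have hcoeff : lCoeff (evalMulChar χ T) 1 = ∑ x : F, ∏ a ∈ T, χ (x + a) := by
    simp only [lCoeff_one, evalMulChar_apply, eval_add, eval_X, eval_C, add_comm]
  rw [← hcoeff, ← Nat.cast_pred hT.card_pos]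
  refine norm_coeff_one_le_of_norm_even_le (c := lCoeff (evalMulChar χ T)) (Nat.cast_nonneg _)
    (lCoeff_zero _) (fun k hk => lCoeff_evalMulChar_eq_zero hχ hT (by omega))
    (natCast_mul_lCoeff _) fun r hr => norm_lPowerSum_evalMulChar_le hχ hT hr

end LFunction

section Potents

open scoped Pointwise

theorem norm_mulChar_apply_le_one {F : Type*} [Field F] [Finite F] (χ : MulChar F ℂ) (a : F) :
    ‖χ a‖ ≤ 1 := by
  have := Fintype.ofFinite F
  by_cases ha : a = 0
  · simp [ha, MulChar.map_zero]
  · refine (Complex.norm_eq_one_of_pow_eq_one (n := Fintype.card F - 1) ?_ ?_).le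
    · rw [← map_pow, FiniteField.pow_card_sub_one_eq_one a ha, map_one]
    · exact (Nat.sub_pos_of_lt Fintype.one_lt_card).ne'

variable {F : Type*} [Field F] [Fintype F]

theorem norm_sum_prod_one_sub_mulChar_sub_card_le {χ : MulChar F ℂ} (hχ : χ ≠ 1) (S : Finset F) :
    ‖∑ x : F, ∏ a ∈ S, (1 - χ (x + a)) - Fintype.card F‖ ≤
      (2 ^ #S - 1) * ((#S - 1) * √(Fintype.card F)) := by
  classical
  have hexpand : ∑ x : F, ∏ a ∈ S, (1 - χ (x + a)) - Fintype.card F =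
      ∑ U ∈ S.powerset.erase ∅, (-1) ^ #U * ∑ x : F, ∏ a ∈ U, χ (x + a) := by
    simp only [sub_eq_add_neg (1 : ℂ), prod_one_add, prod_neg]
    rw [sum_comm, ← add_sum_erase _ _ (empty_mem_powerset S)]
    simp [mul_sum]
  have hcard : (2 ^ #S - 1 : ℝ) = #(S.powerset.erase ∅) := by
    rw [card_erase_of_mem (empty_mem_powerset S), card_powerset, Nat.cast_pred (by positivity)]
    push_cast
    rfl
  rw [hexpand, hcard, ← nsmul_eq_mul]
  refine (norm_sum_le _ _).trans (sum_le_card_nsmul _ _ _ fun U hU => ?_)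
  obtain ⟨hU, hUS⟩ := mem_erase.1 hU
  rw [norm_mul, norm_pow, norm_neg, norm_one, one_pow, one_mul]
  refine (norm_sum_prod_mulChar_le hχ (nonempty_iff_ne_empty.2 hU)).trans ?_
  gcongr
  exact mem_powerset.1 hUS

theorem norm_sum_prod_one_sub_mulChar_le {χ : MulChar F ℂ} {S : Finset F}
    (h : ∀ x, ∃ a ∈ S, x + a ≠ 0 → χ (x + a) = 1) :
    ‖∑ x : F, ∏ a ∈ S, (1 - χ (x + a))‖ ≤ #S * 2 ^ #S := by
  classical
  have hvanish (x : F) (hx : x ∉ -S) : ∏ a ∈ S, (1 - χ (x + a)) = 0 := by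
    obtain ⟨a, ha, hxa⟩ := h x
    refine prod_eq_zero ha (sub_eq_zero.2 (hxa fun h0 => hx ?_).symm)
    rwa [mem_neg', neg_eq_of_add_eq_zero_right h0]
  have hprod (x : F) : ‖∏ a ∈ S, (1 - χ (x + a))‖ ≤ 2 ^ #S := by
    rw [norm_prod, ← prod_const]
    refine prod_le_prod (fun a _ => norm_nonneg _) fun a _ => (norm_sub_le _ _).trans ?_
    rw [norm_one, ← one_add_one_eq_two]
    exact add_le_add_right (norm_mulChar_apply_le_one χ (x + a)) 1
  calc ‖∑ x : F, ∏ a ∈ S, (1 - χ (x + a))‖ = ‖∑ x ∈ -S, ∏ a ∈ S, (1 - χ (x + a))‖ :=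
        congrArg _ (sum_subset (subset_univ _) fun x _ => hvanish x).symm
    _ ≤ ∑ _x ∈ -S, 2 ^ #S := norm_sum_le_of_le _ fun x _ => hprod x
    _ = #S * 2 ^ #S := by rw [sum_const, nsmul_eq_mul, card_neg]

theorem exists_forall_add_ne_zero_and_mulChar_ne_one {χ : MulChar F ℂ} (hχ : χ ≠ 1)
    {S : Finset F} (hS : (2 ^ #S * #S) ^ 2 < Fintype.card F) :
    ∃ x, ∀ a ∈ S, x + a ≠ 0 ∧ χ (x + a) ≠ 1 := by
  by_contra! hall
  have hcard : (Fintype.card F : ℝ) ≤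
      #S * 2 ^ #S + (2 ^ #S - 1) * ((#S - 1) * √(Fintype.card F)) := by
    have := norm_sub_le (∑ x : F, ∏ a ∈ S, (1 - χ (x + a)))
      (∑ x : F, ∏ a ∈ S, (1 - χ (x + a)) - Fintype.card F)
    rw [sub_sub_cancel, Complex.norm_natCast] at this
    exact this.trans (add_le_add (norm_sum_prod_one_sub_mulChar_le hall)
      (norm_sum_prod_one_sub_mulChar_sub_card_le hχ S))
  have hlt : (2 ^ #S * #S : ℝ) < √(Fintype.card F) :=
    Real.lt_sqrt_of_sq_lt (by exact_mod_cast hS)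
  have hsq : √(Fintype.card F) * √(Fintype.card F) = Fintype.card F :=
    Real.mul_self_sqrt (Nat.cast_nonneg _)
  have hone : (1 : ℝ) ≤ #S := by
    obtain ⟨a, ha, -⟩ := hall 0
    exact_mod_cast card_pos.2 ⟨a, ha⟩
  have hpow : (1 : ℝ) ≤ 2 ^ #S := one_le_pow₀ one_le_two
  have hsqrt : 0 ≤ √(Fintype.card F : ℝ) := Real.sqrt_nonneg _
  nlinarith [mul_nonneg (add_nonneg (sub_nonneg.2 hone) (sub_nonneg.2 hpow)) hsqrt,
    mul_lt_mul_of_pos_right hlt (lt_of_le_of_lt (by positivity) hlt)]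

theorem exists_mulChar_ne_one_and_apply_eq_one {d : ℕ} (hd : ¬ Fintype.card F - 1 ∣ d) :
    ∃ χ : MulChar F ℂ, χ ≠ 1 ∧ ∀ b, b ^ d = 1 → χ b = 1 := by
  have hd0 : d ≠ 0 := by
    rintro rfl
    exact hd (dvd_zero _)
  obtain ⟨χ, hχ⟩ := MulChar.exists_mulChar_orderOf F dvd_rfl (Complex.isPrimitiveRoot_exp _
    (Nat.sub_pos_of_lt (Fintype.one_lt_card (α := F))).ne')
  refine ⟨χ ^ d, fun h => hd (hχ ▸ orderOf_dvd_of_pow_eq_one h), fun b hb => ?_⟩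
  rw [MulChar.pow_apply' χ hd0, ← map_pow, hb, map_one]

theorem card_filter_pow_eq_self_le [DecidableEq F] {m : ℕ} (hm : 1 < m) :
    #{a : F | a ^ m = a} ≤ m := by
  have hroots : ({a : F | a ^ m = a} : Finset F).val ≤ (X ^ m - X : F[X]).roots := by
    refine (Multiset.le_iff_subset (nodup _)).2 fun a ha => ?_
    rw [mem_roots (FiniteField.X_pow_card_sub_X_ne_zero F hm)]
    simpa [sub_eq_zero] using ha
  calc #{a : F | a ^ m = a} ≤ (X ^ m - X : F[X]).natDegree :=
        (Multiset.card_le_card hroots).trans (card_roots' _)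
    _ = m := FiniteField.X_pow_card_sub_X_natDegree_eq F hm

theorem not_sum_of_m_potent_and_n_potent_of_large_general {S : Finset F}
    (hS : (2 ^ #S * #S) ^ 2 < Fintype.card F) {n : ℕ} (hn : ¬ Fintype.card F - 1 ∣ n - 1) :
    ¬ ∀ γ : F, ∃ a b : F, a ∈ S ∧ b ^ n = b ∧ a + b = γ := by
  classical
  intro hcover
  obtain ⟨χ, hχ, hχn⟩ := exists_mulChar_ne_one_and_apply_eq_one hn
  obtain ⟨x, hx⟩ := exists_forall_add_ne_zero_and_mulChar_ne_one hχ
    (S := -S) (by rwa [card_neg])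
  obtain ⟨a, b, ha, hb, rfl⟩ := hcover x
  obtain ⟨hb0, hχb⟩ := hx (-a) (neg_mem_neg ha)
  rw [add_neg_cancel_comm] at hb0 hχb
  have hn0 : n ≠ 0 := by
    rintro rfl
    exact hn (dvd_zero _)
  exact hχb (hχn b (mul_right_cancel₀ hb0 (by rw [pow_sub_one_mul hn0, hb, one_mul])))

end Potents

/-- For a fixed `m > 2` and a prime power `q` with `(m-1) ∣ (q-1)` and `q > (2^m · m)²`,
for every `n` with `1 < n < q` and `(n-1) ∣ (q-1)`, not every element of the finite field
with `q` elements is the sum of an `m`-potent and an `n`-potent. -/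
theorem not_sum_of_m_potent_and_n_potent_of_large
    (m q : ℕ) (hm : 2 < m) (hq : IsPrimePow q) (hmq : (m - 1) ∣ (q - 1))
    (hq' : (2 ^ m * m) ^ 2 < q)
    (F : Type*) [Field F] [Fintype F] (hF : Fintype.card F = q) :
    ∀ n : ℕ, 1 < n → n < q → (n - 1) ∣ (q - 1) →
      ¬ (∀ γ : F, ∃ a b : F, a ^ m = a ∧ b ^ n = b ∧ a + b = γ) := by
  classical
  intro n hn hnq _
  have hcard : #{a : F | a ^ m = a} ≤ m := card_filter_pow_eq_self_le (by omega)
  have hS : (2 ^ #{a : F | a ^ m = a} * #{a : F | a ^ m = a}) ^ 2 < Fintype.card F :=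
    hF ▸ lt_of_le_of_lt (by gcongr; exact one_le_two) hq'
  simpa using not_sum_of_m_potent_and_n_potent_of_large_general hS (n := n)
    (Nat.not_dvd_of_pos_of_lt (by omega) (by omega))
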